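/- arXiv:1812.07271 — 11 statements merged into one kernel-verified Lean document; each statement's English description precedes it below -/
import Mathlib

section
/- Let r > 0 be a real number, q ∈ (0,1) and θ ∈ (0,1). For every natural number y, the series ∑_{x=y}^{∞} [C(x,y) θ^y (1-θ)^{x-y}] · [Γ(x+r)/(x! Γ(r)) q^x (1-q)^r] converges and its sum equals Γ(y+r)/(y! Γ(r)) · p̃^y (1-p̃)^r, where p̃ = qθ/(1 - q(1-θ)). In other words, if X has a negative binomial NB(r,q) distribution and Y given X = x has a binomial Bin(x,θ) distribution, then the marginal distribution of Y is NB(r, qθ/(1-q(1-θ))). -/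
/-- Negative binomial pmf: NB(k; r, p) = Γ(k+r)/(k! Γ(r)) · p^k (1-p)^r. -/
noncomputable def nbPMF (r p : ℝ) (k : ℕ) : ℝ :=
  Real.Gamma ((k : ℝ) + r) / ((k.factorial : ℝ) * Real.Gamma r) * p ^ k * (1 - p) ^ r

/-- Binomial pmf: Bin(y; n, θ) = C(n,y) θ^y (1-θ)^{n-y} (zero for y > n via `Nat.choose`). -/
noncomputable def binPMF (n : ℕ) (θ : ℝ) (y : ℕ) : ℝ :=
  (n.choose y : ℝ) * θ ^ y * (1 - θ) ^ (n - y)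

lemma gamma_div_eq_choose (s : ℝ) (hs : 0 < s) (n : ℕ) :
    Real.Gamma (n + s) / (n.factorial * Real.Gamma s) = Ring.choose (s + n - 1) n := by
  have h1 : Ring.choose (s + n - 1) n = Ring.multichoose s n := by
    rw [Ring.choose]; congr 1; ring
  have h2 := Ring.factorial_nsmul_multichoose_eq_ascPochhammer s n
  rw [Polynomial.ascPochhammer_smeval_eq_eval, nsmul_eq_mul] at h2
  have hG := (Real.Gamma_pos_of_pos hs).ne'
  have hf : (n.factorial : ℝ) ≠ 0 := by positivity
  have h3 : Real.Gamma (n + s) = (ascPochhammer ℝ n).eval s * Real.Gamma s := by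
    clear h1 h2 hf
    induction n with
    | zero => simp
    | succ k ih =>
      have : ((k + 1 : ℕ) : ℝ) + s = (k + s) + 1 := by push_cast; ring
      rw [this, Real.Gamma_add_one (by positivity), ih, ascPochhammer_succ_eval]
      ring
  rw [h1, h3, ← h2]
  field_simp

lemma hasSum_negBin (s t : ℝ) (hs : 0 < s) (ht : |t| < 1) :
    HasSum (fun n : ℕ => Real.Gamma (n + s) / (n.factorial * Real.Gamma s) * t ^ n)
      (1 / (1 - t) ^ s) := by
  have h := (Real.one_div_one_sub_rpow_hasFPowerSeriesOnBall_zero s).hasSum (y := t)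
    (by simpa [Metric.mem_eball, edist_dist, Real.dist_eq] using ht)
  simp only [zero_add] at h
  convert h using 1
  · rfl
  funext n
  rw [gamma_div_eq_choose s hs]
  simp [FormalMultilinearSeries.ofScalars, List.prod_ofFn]

/-- If X ~ NB(r,q) and Y | X = x ~ Bin(x, θ), then marginally
    Y ~ NB(r, qθ/(1-q(1-θ))).  The series over x (whose terms vanish for x < y
    since C(x,y) = 0) converges to the NB pmf of y at the new success parameter. -/
theorem negBinomial_binomial_thinning_marginal
    (r q θ : ℝ) (hr : 0 < r) (hq : q ∈ Set.Ioo (0 : ℝ) 1) (hθ : θ ∈ Set.Ioo (0 : ℝ) 1)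
    (y : ℕ) :
    HasSum (fun x : ℕ => binPMF x θ y * nbPMF r q x)
      (nbPMF r (q * θ / (1 - q * (1 - θ))) y) := by
  obtain ⟨hq0, hq1⟩ := hq
  obtain ⟨hθ0, hθ1⟩ := hθ
  have ht0 : 0 < q * (1 - θ) := mul_pos hq0 (by linarith)
  have ht1 : q * (1 - θ) < 1 := by nlinarith
  have hs : 0 < (y : ℝ) + r := by positivity
  have h := (hasSum_negBin (y + r) (q * (1 - θ)) hs (by rw [abs_of_pos ht0]; exact ht1)).mul_left
    ((θ * q) ^ y * (1 - q) ^ r / (y.factorial * Real.Gamma r) * Real.Gamma (y + r))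
  have hG := (Real.Gamma_pos_of_pos hr).ne'
  have hG' := (Real.Gamma_pos_of_pos hs).ne'
  have hfy : (y.factorial : ℝ) ≠ 0 := by positivity
  rw [← hasSum_nat_add_iff' y]
  have h0 : ∑ i ∈ Finset.range y, binPMF i θ y * nbPMF r q i = 0 := by
    apply Finset.sum_eq_zero
    intro i hi
    simp [binPMF, Nat.choose_eq_zero_of_lt (Finset.mem_range.1 hi)]
  rw [h0, sub_zero]
  convert h using 1
  · rfl
  · funext n
    have hfn : (n.factorial : ℝ) ≠ 0 := by positivity
    have hfny : ((n + y).factorial : ℝ) ≠ 0 := by positivity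
    have hc : ((n + y).choose y : ℝ) = (n + y).factorial / (n.factorial * y.factorial) := by
      rw [eq_div_iff (by positivity)]
      have := Nat.add_choose_mul_factorial_mul_factorial n y
      rw [← mul_assoc]
      exact_mod_cast this
    have ha : ((n + y : ℕ) : ℝ) + r = n + (y + r) := by push_cast; ring
    simp only [binPMF, nbPMF, hc, ha, Nat.add_sub_cancel]
    rw [mul_pow, mul_pow, pow_add]
    field_simp
  · have hd : 0 < 1 - q * (1 - θ) := by linarith
    have hp : 1 - q * θ / (1 - q * (1 - θ)) = (1 - q) / (1 - q * (1 - θ)) := by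
      field_simp; ring
    have hdr := (Real.rpow_pos_of_pos hd r).ne'
    simp only [nbPMF]
    rw [hp, Real.div_rpow (by linarith) hd.le, Real.rpow_add hd, Real.rpow_natCast, div_pow,
      mul_comm q θ]
    field_simp
end

section
/- Let r > 0 be a real number, q ∈ (0,1) and Θ ∈ (0,1). For every natural number x, the transition probabilities p_Θ(x, z) = ∑_{y=0}^{min(x,z)} Γ(z+r)/((z-y)! Γ(y+r)) · [q(1-Θ)]^{z-y} · [1-q(1-Θ)]^{r+y} · C(x,y) Θ^y (1-Θ)^{x-y} satisfy ∑_{z=0}^{∞} p_Θ(x, z) = 1; that is, p_Θ defines a valid Markov transition kernel on the non-negative integers. -/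
/-- Transition kernel p_Θ(x, z) = ∑_{y=0}^{min(x,z)}
    Γ(z+r)/((z-y)! Γ(y+r)) · [q(1-Θ)]^{z-y} · [1-q(1-Θ)]^{r+y} · C(x,y) Θ^y (1-Θ)^{x-y}. -/
noncomputable def pKer (r q Θ : ℝ) (x z : ℕ) : ℝ :=
  ∑ y ∈ Finset.range (min x z + 1),
    Real.Gamma ((z : ℝ) + r) / (((z - y).factorial : ℝ) * Real.Gamma ((y : ℝ) + r)) *
      (q * (1 - Θ)) ^ (z - y) * (1 - q * (1 - Θ)) ^ (r + (y : ℝ)) *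
      (x.choose y : ℝ) * Θ ^ y * (1 - Θ) ^ (x - y)

theorem gamma_add_nat_eq (a : ℝ) (ha : 0 < a) (n : ℕ) :
    Real.Gamma (a + n) = (ascPochhammer ℝ n).eval a * Real.Gamma a := by
  induction n with
  | zero => simp
  | succ n ih =>
    have h : a + (n : ℝ) ≠ 0 := by positivity
    rw [Nat.cast_succ, ← add_assoc, Real.Gamma_add_one h, ih, ascPochhammer_succ_eval]
    ring

theorem choose_eq_gamma (a : ℝ) (ha : 0 < a) (n : ℕ) :
    Ring.choose (a + n - 1) n = Real.Gamma (a + n) / (n.factorial * Real.Gamma a) := by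
  have hG := (Real.Gamma_pos_of_pos ha).ne'
  have hf : (n.factorial : ℝ) ≠ 0 := by exact_mod_cast n.factorial_ne_zero
  have h := Ring.factorial_nsmul_multichoose_eq_ascPochhammer a n
  rw [Polynomial.ascPochhammer_smeval_eq_eval, nsmul_eq_mul] at h
  rw [gamma_add_nat_eq a ha, ← h, Ring.choose, show a + (n : ℝ) - 1 - n + 1 = a by ring]
  field_simp

theorem negBin_hasSum (a t : ℝ) (ha : 0 < a) (h0 : 0 < t) (h1 : t < 1) :
    HasSum (fun n : ℕ => Real.Gamma (a + n) / (n.factorial * Real.Gamma a) * t ^ n)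
      (1 / (1 - t) ^ a) := by
  have h := (Real.one_div_one_sub_rpow_hasFPowerSeriesOnBall_zero a).hasSum (y := t) (by
    rw [← ENNReal.ofReal_one, Metric.eball_ofReal]
    simp [abs_of_pos h0, h1])
  simp only [zero_add] at h
  convert! h using 1
  funext n
  rw [← choose_eq_gamma a ha]
  simp [mul_comm]

/-- For every state x, the transition probabilities sum to one:
    p_Θ defines a valid Markov transition kernel on ℕ. -/
theorem pKer_hasSum_one
    (r q Θ : ℝ) (hr : 0 < r) (hq : q ∈ Set.Ioo (0 : ℝ) 1) (hΘ : Θ ∈ Set.Ioo (0 : ℝ) 1)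
    (x : ℕ) :
    HasSum (fun z : ℕ => pKer r q Θ x z) 1 := by
  obtain ⟨hq0, hq1⟩ := hq
  obtain ⟨hT0, hT1⟩ := hΘ
  have ht0 : 0 < q * (1 - Θ) := mul_pos hq0 (by linarith)
  have ht1 : q * (1 - Θ) < 1 := by nlinarith
  have key : ∀ y ∈ Finset.range (x + 1), HasSum (fun z : ℕ => if y ≤ z then
      Real.Gamma ((z : ℝ) + r) / (((z - y).factorial : ℝ) * Real.Gamma ((y : ℝ) + r)) *
      (q * (1 - Θ)) ^ (z - y) * (1 - q * (1 - Θ)) ^ (r + (y : ℝ)) *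
      (x.choose y : ℝ) * Θ ^ y * (1 - Θ) ^ (x - y) else 0)
      (Θ ^ y * (1 - Θ) ^ (x - y) * (x.choose y : ℝ)) := by
    intro y _
    have hinj : Function.Injective (fun n : ℕ => n + y) := add_left_injective y
    rw [← hinj.hasSum_iff]
    · have hp : 0 < (1 - q * (1 - Θ)) ^ (r + (y : ℝ)) := Real.rpow_pos_of_pos (by linarith) _
      have h := (negBin_hasSum (r + y) (q * (1 - Θ)) (by positivity) ht0 ht1).mul_right
        ((1 - q * (1 - Θ)) ^ (r + (y : ℝ)) * (x.choose y : ℝ) * Θ ^ y * (1 - Θ) ^ (x - y))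
      convert! h using 1
      · funext n
        simp only [Function.comp_apply, le_add_iff_nonneg_left, zero_le, if_true,
          Nat.add_sub_cancel]
        rw [show ((n + y : ℕ) : ℝ) + r = r + y + n by push_cast; ring, add_comm (y : ℝ) r]
        ring
      · generalize (1 - q * (1 - Θ)) ^ (r + (y : ℝ)) = P at hp
        have hP := hp.ne'
        field_simp
    · intro z hz
      rw [if_neg]
      intro hyz
      exact hz ⟨z - y, Nat.sub_add_cancel hyz⟩
  have hs := hasSum_sum key
  rw [← add_pow, add_sub_cancel, one_pow] at hs
  convert! hs using 1
  funext z
  rw [pKer, ← Finset.sum_filter]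
  refine Finset.sum_congr ?_ fun _ _ => rfl
  ext y
  simp only [Finset.mem_range, Finset.mem_filter]
  omega
end

section
/- Let r > 0 be a real number, q ∈ (0,1) and Θ ∈ (0,1). The Markov kernel p_Θ is reversible with respect to the negative binomial NB(r,q) distribution: for all natural numbers x and z, NB(x; r, q) · p_Θ(x, z) = NB(z; r, q) · p_Θ(z, x), where NB(k; r, q) = Γ(k+r)/(k! Γ(r)) q^k (1-q)^r. -/
theorem pKer_term_symm (A B C D G H e1 e2 fy fa fb qy qa qb ty ta tb : ℝ)
    (f1 : e1 ≠ 0) (f2 : e2 ≠ 0) :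
    C / (e1 * G) * (qy * qa) * B *
      (D / (fb * H) * (qb * tb) * A * (e1 / (fy * fa)) * ty * ta) =
    D / (e2 * G) * (qy * qb) * B *
      (C / (fa * H) * (qa * ta) * A * (e2 / (fy * fb)) * ty * tb) := by
  simp only [div_eq_mul_inv, mul_inv]
  have g1 := mul_inv_cancel₀ f1
  have g2 := mul_inv_cancel₀ f2
  linear_combination (C * G⁻¹ * qy * qa * B * D * fb⁻¹ * H⁻¹ * qb * tb * A * fy⁻¹ * fa⁻¹ * ty * ta) * (g1 - g2)

/-- The kernel p_Θ is reversible with respect to the NB(r,q) distribution: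
    NB(x; r, q) · p_Θ(x, z) = NB(z; r, q) · p_Θ(z, x). -/
theorem pKer_reversible
    (r q Θ : ℝ) (hr : 0 < r) (hq : q ∈ Set.Ioo (0 : ℝ) 1) (hΘ : Θ ∈ Set.Ioo (0 : ℝ) 1)
    (x z : ℕ) :
    nbPMF r q x * pKer r q Θ x z = nbPMF r q z * pKer r q Θ z x := by
  unfold nbPMF pKer
  rw [min_comm z x, Finset.mul_sum, Finset.mul_sum]
  refine Finset.sum_congr rfl fun y hy => ?_
  have hy' : y ≤ min x z := Nat.lt_succ_iff.mp (Finset.mem_range.mp hy)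
  obtain ⟨a, rfl⟩ := Nat.exists_eq_add_of_le (hy'.trans (min_le_left x z))
  obtain ⟨b, rfl⟩ := Nat.exists_eq_add_of_le (hy'.trans (min_le_right (y + a) z))
  rw [Nat.cast_add_choose ℝ, Nat.cast_add_choose ℝ, Nat.add_sub_cancel_left,
    Nat.add_sub_cancel_left]
  have h1 : Real.Gamma r ≠ 0 := (Real.Gamma_pos_of_pos hr).ne'
  have h2 : Real.Gamma ((y : ℝ) + r) ≠ 0 := (Real.Gamma_pos_of_pos (by positivity)).ne'
  have f1 : ((y + a).factorial : ℝ) ≠ 0 := by positivity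
  have f2 : ((y + b).factorial : ℝ) ≠ 0 := by positivity
  have f3 : (y.factorial : ℝ) ≠ 0 := by positivity
  have f4 : (a.factorial : ℝ) ≠ 0 := by positivity
  have f5 : (b.factorial : ℝ) ≠ 0 := by positivity
  rw [mul_pow, mul_pow, pow_add q y a, pow_add q y b]
  exact pKer_term_symm _ _ _ _ _ _ _ _ _ _ _ _ _ _ _ _ _ f1 f2
end

section
/- Let r > 0 be a real number, q ∈ (0,1) and Θ ∈ (0,1). The negative binomial NB(r,q) distribution is invariant for the kernel p_Θ: for every natural number z, the series ∑_{x=0}^{∞} NB(x; r, q) · p_Θ(x, z) converges and equals NB(z; r, q), where NB(k; r, q) = Γ(k+r)/(k! Γ(r)) q^k (1-q)^r. -/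
lemma gamma_asc (a : ℝ) (ha : 0 < a) (n : ℕ) :
    Real.Gamma ((n : ℝ) + a) = (n.factorial : ℝ) * Ring.choose (a + n - 1) n * Real.Gamma a := by
  rw [← Ring.multichoose_eq, ← nsmul_eq_mul, Ring.factorial_nsmul_multichoose_eq_ascPochhammer,
    Polynomial.ascPochhammer_smeval_eq_eval]
  induction n with
  | zero => simp
  | succ k ih =>
    rw [ascPochhammer_succ_eval]
    have h : ((k + 1 : ℕ) : ℝ) + a = ((k : ℝ) + a) + 1 := by push_cast; ring
    rw [h, Real.Gamma_add_one (by positivity), ih]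
    ring

lemma nb_series (a t : ℝ) (ha : 0 < a) (h0 : 0 < t) (h1 : t < 1) :
    HasSum (fun m : ℕ => Real.Gamma ((m : ℝ) + a) / (m.factorial : ℝ) * t ^ m)
      (Real.Gamma a / (1 - t) ^ a) := by
  have h := (Real.one_div_one_sub_rpow_hasFPowerSeriesOnBall_zero a).hasSum (y := t) (by
    simp [enorm_eq_nnnorm, ← NNReal.coe_lt_coe, abs_of_pos h0, h1])
  have h2 := h.mul_left (Real.Gamma a)
  convert! h2 using 1
  · ext m
    rw [gamma_asc a ha, FormalMultilinearSeries.ofScalars_apply_eq]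
    have : (m.factorial : ℝ) ≠ 0 := by positivity
    field_simp
    simp
  · simp [div_eq_mul_inv]

lemma per_y (r q Θ : ℝ) (hr : 0 < r) (hq : q ∈ Set.Ioo (0 : ℝ) 1) (hΘ : Θ ∈ Set.Ioo (0 : ℝ) 1)
    (z y : ℕ) (hy : y ≤ z) :
    HasSum (fun x : ℕ => nbPMF r q x *
      (Real.Gamma ((z : ℝ) + r) / (((z - y).factorial : ℝ) * Real.Gamma ((y : ℝ) + r)) *
      (q * (1 - Θ)) ^ (z - y) * (1 - q * (1 - Θ)) ^ (r + (y : ℝ)) *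
      (x.choose y : ℝ) * Θ ^ y * (1 - Θ) ^ (x - y)))
      (Real.Gamma ((z : ℝ) + r) / ((z.factorial : ℝ) * Real.Gamma r) * (1 - q) ^ r *
        ((q * Θ) ^ y * (q * (1 - Θ)) ^ (z - y) * (z.choose y : ℝ))) := by
  obtain ⟨hq0, hq1⟩ := hq
  obtain ⟨hT0, hT1⟩ := hΘ
  have ht0 : 0 < q * (1 - Θ) := mul_pos hq0 (by linarith)
  have ht1 : q * (1 - Θ) < 1 := by nlinarith
  have hP : 0 < (1 - q * (1 - Θ)) ^ ((y : ℝ) + r) := Real.rpow_pos_of_pos (by linarith) _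
  have hG : 0 < Real.Gamma ((y : ℝ) + r) := Real.Gamma_pos_of_pos (by positivity)
  have hGr : 0 < Real.Gamma r := Real.Gamma_pos_of_pos hr
  rw [← (add_left_injective y).hasSum_iff]
  · have h := (nb_series ((y : ℝ) + r) (q * (1 - Θ)) (by positivity) ht0 ht1).mul_left
      (Real.Gamma ((z : ℝ) + r) / (((z - y).factorial : ℝ) * Real.Gamma ((y : ℝ) + r)) *
      (q * (1 - Θ)) ^ (z - y) * (1 - q * (1 - Θ)) ^ ((y : ℝ) + r) * (q * Θ) ^ y * (1 - q) ^ r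
      / (Real.Gamma r * y.factorial))
    convert! h using 1
    · ext m
      simp only [Function.comp, nbPMF, Nat.add_sub_cancel]
      have hc : ((m + y).choose y : ℝ) = ((m + y).factorial : ℝ) / (m.factorial * y.factorial) := by
        rw [Nat.cast_choose ℝ (Nat.le_add_left y m), Nat.add_sub_cancel, mul_comm (y.factorial : ℝ)]
      rw [hc, add_comm r (y : ℝ)]
      have e : ((m + y : ℕ) : ℝ) + r = (m : ℝ) + ((y : ℝ) + r) := by push_cast; ring
      rw [e, mul_pow q (1 - Θ) m, mul_pow q Θ, pow_add]
      have := Nat.factorial_pos (m + y)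
      field_simp
    · rw [Nat.cast_choose ℝ hy]
      field_simp
  · intro x hx
    have : x < y := by
      by_contra hh
      exact hx ⟨x - y, by simp; omega⟩
    simp [Nat.choose_eq_zero_of_lt this]

/-- The NB(r,q) distribution is invariant for the kernel p_Θ:
    ∑_x NB(x; r, q) · p_Θ(x, z) converges and equals NB(z; r, q). -/
theorem pKer_invariant
    (r q Θ : ℝ) (hr : 0 < r) (hq : q ∈ Set.Ioo (0 : ℝ) 1) (hΘ : Θ ∈ Set.Ioo (0 : ℝ) 1)
    (z : ℕ) :
    HasSum (fun x : ℕ => nbPMF r q x * pKer r q Θ x z) (nbPMF r q z) := by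
  have h := hasSum_sum (s := Finset.range (z + 1)) (fun y hy =>
    per_y r q Θ hr hq hΘ z y (by simpa [Nat.lt_succ_iff] using hy))
  convert! h using 1
  · ext x
    rw [← Finset.mul_sum, pKer]
    congr 1
    apply Finset.sum_subset
    · intro y hy
      simp at hy ⊢
      omega
    · intro y hy hy'
      have : x < y := by
        simp at hy hy'
        omega
      simp [Nat.choose_eq_zero_of_lt this]
  · rw [← Finset.mul_sum, ← add_pow, nbPMF]
    have : q * Θ + q * (1 - Θ) = q := by ring
    rw [this]
    ring
end

section
/- Let q ∈ (0,1), c > 0, and for t > 0 set Θ_t = (1-q)/(e^{ct} - q). Then for all t, s > 0 the two Chapman–Kolmogorov consistency equations hold: (i) [1 - q(1-Θ_s)(1-Θ_t)] / ([1-q(1-Θ_t)][1-q(1-Θ_s)]) = 1/(1 - q(1-Θ_{t+s})), and (ii) [1 - Θ_s Θ_t - q(1-Θ_t)(1-Θ_s)] / ([1-q(1-Θ_t)][1-q(1-Θ_s)]) = (1-Θ_{t+s})/(1 - q(1-Θ_{t+s})). -/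
/-- With Θ_t = (1-q)/(e^{ct} - q), the two Chapman–Kolmogorov consistency
    equations hold for all t, s > 0. -/
theorem theta_chapman_kolmogorov_equations
    (q c : ℝ) (hq : q ∈ Set.Ioo (0 : ℝ) 1) (hc : 0 < c)
    (t s : ℝ) (ht : 0 < t) (hs : 0 < s) :
    (letI Θ : ℝ → ℝ := fun u => (1 - q) / (Real.exp (c * u) - q)
    ((1 - q * (1 - Θ s) * (1 - Θ t)) /
        ((1 - q * (1 - Θ t)) * (1 - q * (1 - Θ s)))
      = 1 / (1 - q * (1 - Θ (t + s)))) ∧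
    ((1 - Θ s * Θ t - q * (1 - Θ t) * (1 - Θ s)) /
        ((1 - q * (1 - Θ t)) * (1 - q * (1 - Θ s)))
      = (1 - Θ (t + s)) / (1 - q * (1 - Θ (t + s))))) := by
  obtain ⟨h0, h1⟩ := hq
  have ha : 1 < Real.exp (c * t) := Real.one_lt_exp_iff.mpr (mul_pos hc ht)
  have hb : 1 < Real.exp (c * s) := Real.one_lt_exp_iff.mpr (mul_pos hc hs)
  have hab : Real.exp (c * (t + s)) = Real.exp (c * t) * Real.exp (c * s) := by
    rw [mul_add, Real.exp_add]
  simp only [hab]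
  generalize Real.exp (c * t) = a at *
  generalize Real.exp (c * s) = b at *
  have h1q : 1 - q ≠ 0 := by linarith
  have ha0 : a ≠ 0 := by linarith
  have hb0 : b ≠ 0 := by linarith
  have haq : a - q ≠ 0 := by linarith
  have hbq : b - q ≠ 0 := by linarith
  have habq : a * b - q ≠ 0 := by nlinarith
  have e : ∀ x : ℝ, x - q ≠ 0 → 1 - q * (1 - (1 - q) / (x - q)) = x * (1 - q) / (x - q) := by
    intro x hx
    field_simp
    ring
  rw [e a haq, e b hbq, e (a * b) habq]
  constructor
  · field_simp
    ring
  · have e2 : 1 - (1 - q) / (a * b - q) = (a * b - 1) / (a * b - q) := by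
      rw [eq_div_iff habq, sub_mul, div_mul_cancel₀ _ habq]
      ring
    rw [e2, div_div_div_cancel_right₀ habq]
    field_simp
    ring
end

section
/- Let r > 0 be a real number, q ∈ (0,1), c > 0, and define p_t(x,z) as the transition kernel p_Θ with parameter Θ = Θ_t = (1-q)/(e^{ct}-q). Then the family (p_t)_{t>0} satisfies the Chapman–Kolmogorov equations: for all t, s > 0 and all natural numbers x and z, the series ∑_{y=0}^{∞} p_t(x, y) · p_s(y, z) converges and equals p_{t+s}(x, z). -/
theorem pk_congr {f g : ℕ → ℝ} {a b : ℝ} (h : HasSum f a) (hfg : g = f) (hab : b = a) :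
    HasSum g b := by
  rw [hfg, hab]
  exact h

theorem pk_nb (s v : ℝ) (hs : 0 < s) (hv : |v| < 1) :
    HasSum (fun n : ℕ => Real.Gamma ((n : ℝ) + s) / ((n.factorial : ℝ) * Real.Gamma s) * v ^ n)
      (1 / (1 - v) ^ s) := by
  have h := (Real.one_div_one_sub_rpow_hasFPowerSeriesOnBall_zero s).hasSum (y := v)
    (by simpa [enorm_eq_nnnorm, ← NNReal.coe_lt_coe] using hv)
  rw [zero_add] at h
  refine pk_congr h ?_ rfl
  funext n
  rw [FormalMultilinearSeries.ofScalars_apply_eq, smul_eq_mul]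
  congr 1
  have h1 : (n.factorial : ℝ) * Ring.choose (s + n - 1) n = (ascPochhammer ℝ n).eval s := by
    rw [Ring.choose, show s + (n : ℝ) - 1 - n + 1 = s by ring, ← Polynomial.ascPochhammer_smeval_eq_eval s n,
      ← Ring.factorial_nsmul_multichoose_eq_ascPochhammer, nsmul_eq_mul]
  have h2 : ∀ m : ℕ, Real.Gamma ((m : ℝ) + s) = (ascPochhammer ℝ m).eval s * Real.Gamma s := by
    intro m
    induction m with
    | zero => simp
    | succ m ih =>
      rw [ascPochhammer_succ_eval, show ((m + 1 : ℕ) : ℝ) + s = ((m : ℝ) + s) + 1 by push_cast; ring,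
        Real.Gamma_add_one (by positivity), ih]
      ring
  have h3 := (Real.Gamma_pos_of_pos hs).ne'
  have h4 : (n.factorial : ℝ) ≠ 0 := by positivity
  rw [h2 n, ← h1]
  field_simp

theorem pk_eq (r q Θ : ℝ) (x z : ℕ) : pKer r q Θ x z =
    ∑ y ∈ Finset.range (x + 1), if y ≤ z then
    Real.Gamma ((z : ℝ) + r) / (((z - y).factorial : ℝ) * Real.Gamma ((y : ℝ) + r)) *
      (q * (1 - Θ)) ^ (z - y) * (1 - q * (1 - Θ)) ^ (r + (y : ℝ)) *
      (x.choose y : ℝ) * Θ ^ y * (1 - Θ) ^ (x - y) else 0 := by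
  rw [← Finset.sum_filter, pKer]
  congr 1
  ext y
  simp

theorem pk_gf (r q Θ : ℝ) (hr : 0 < r) (hq0 : 0 < q) (hq1 : q < 1) (h0 : 0 < Θ) (h1 : Θ < 1)
    (u : ℝ) (hu : |u| ≤ 1) (x : ℕ) :
    HasSum (fun z : ℕ => pKer r q Θ x z * u ^ z)
      (((1 - q * (1 - Θ)) / (1 - q * (1 - Θ) * u)) ^ r *
        (Θ * (u * ((1 - q * (1 - Θ)) / (1 - q * (1 - Θ) * u))) + (1 - Θ)) ^ x) := by
  set a := q * (1 - Θ) with ha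
  have ha0 : 0 < a := mul_pos hq0 (by linarith)
  have ha1 : a < 1 := by nlinarith
  have hau : |a * u| < 1 := by
    rw [abs_mul, abs_of_pos ha0]
    nlinarith [abs_nonneg u]
  have hd : 0 < 1 - a * u := by linarith [(abs_lt.1 hau).2]
  have ha2 : 0 < 1 - a := by linarith
  have key : ∀ y ∈ Finset.range (x + 1), HasSum (fun z : ℕ => (if y ≤ z then
      Real.Gamma ((z : ℝ) + r) / (((z - y).factorial : ℝ) * Real.Gamma ((y : ℝ) + r)) *
      a ^ (z - y) * (1 - a) ^ (r + (y : ℝ)) *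
      (x.choose y : ℝ) * Θ ^ y * (1 - Θ) ^ (x - y) else 0) * u ^ z)
      (((1 - a) / (1 - a * u)) ^ r * ((Θ * (u * ((1 - a) / (1 - a * u)))) ^ y *
        (1 - Θ) ^ (x - y) * (x.choose y : ℝ))) := by
    intro y _
    rw [← Function.Injective.hasSum_iff (add_left_injective y)]
    · have h := (pk_nb ((y : ℝ) + r) (a * u) (by positivity) hau).mul_left
        ((1 - a) ^ (r + (y : ℝ)) * (x.choose y : ℝ) * Θ ^ y * (1 - Θ) ^ (x - y) * u ^ y)
      refine pk_congr h ?_ ?_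
      · funext n
        simp only [Function.comp_apply, le_add_iff_nonneg_left, zero_le, if_true,
          Nat.add_sub_cancel]
        rw [show ((n + y : ℕ) : ℝ) + r = (n : ℝ) + ((y : ℝ) + r) by push_cast; ring, mul_pow a u n,
          pow_add]
        ring
      · rw [add_comm (y : ℝ) r, Real.rpow_add_natCast ha2.ne', Real.rpow_add_natCast hd.ne',
          Real.div_rpow ha2.le hd.le, mul_pow, mul_pow, div_pow]
        have := (Real.rpow_pos_of_pos hd r).ne'
        field_simp
    · intro z hz
      have : ¬ y ≤ z := fun h => hz ⟨z - y, by simp; omega⟩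
      simp [this]
  have h := hasSum_sum key
  rw [← Finset.mul_sum, ← add_pow] at h
  refine pk_congr h ?_ rfl
  funext z
  rw [pk_eq, Finset.sum_mul]

theorem pk_gfE (r q E : ℝ) (hr : 0 < r) (hq0 : 0 < q) (hq1 : q < 1) (hE : 1 < E)
    (u : ℝ) (hu : |u| ≤ 1) (x : ℕ) :
    HasSum (fun z : ℕ => pKer r q ((1 - q) / (E - q)) x z * u ^ z)
      ((E * (1 - q) / (E - q - q * (E - 1) * u)) ^ r *
        (((E - 1) + (1 - q * E) * u) / (E - q - q * (E - 1) * u)) ^ x) := by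
  have hEq : 0 < E - q := by linarith
  have hu2 := (abs_le.1 hu).2
  have hd : 0 < E - q - q * (E - 1) * u := by
    have : 0 < q * (E - 1) := mul_pos hq0 (by linarith)
    nlinarith
  have h := pk_gf r q ((1 - q) / (E - q)) hr hq0 hq1 (div_pos (by linarith) hEq)
    ((div_lt_one hEq).2 (by linarith)) u hu x
  have e1 : 1 - (1 - q) / (E - q) = (E - 1) / (E - q) := by field_simp; ring
  have e2 : (1 - q * ((E - 1) / (E - q))) / (1 - q * ((E - 1) / (E - q)) * u) =
      E * (1 - q) / (E - q - q * (E - 1) * u) := by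
    have e3 : 1 - q * ((E - 1) / (E - q)) * u = (E - q - q * (E - 1) * u) / (E - q) := by
      field_simp
    have e4 : 1 - q * ((E - 1) / (E - q)) = E * (1 - q) / (E - q) := by
      field_simp; ring
    rw [e3, e4]
    field_simp
  rw [e1, e2] at h
  refine pk_congr h rfl ?_
  congr 2
  generalize hdd : E - q - q * (E - 1) * u = d at *
  have := hd.ne'
  have := hEq.ne'
  field_simp
  rw [← hdd]
  ring

theorem pk_nonneg (r q E : ℝ) (hr : 0 < r) (hq0 : 0 < q) (hq1 : q < 1) (hE : 1 < E) (x z : ℕ) :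
    0 ≤ pKer r q ((1 - q) / (E - q)) x z := by
  have hEq : 0 < E - q := by linarith
  have h0 : 0 < (1 - q) / (E - q) := div_pos (by linarith) hEq
  have h1 : 0 < 1 - (1 - q) / (E - q) := by
    have : (1 - q) / (E - q) < 1 := (div_lt_one hEq).2 (by linarith)
    linarith
  have h2 : 0 < 1 - q * (1 - (1 - q) / (E - q)) := by nlinarith
  rw [pKer]
  refine Finset.sum_nonneg fun y _ => ?_
  have g1 := Real.Gamma_pos_of_pos (show 0 < (z : ℝ) + r by positivity)
  have g2 := Real.Gamma_pos_of_pos (show 0 < (y : ℝ) + r by positivity)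
  have := Real.rpow_pos_of_pos h2 (r + y)
  positivity

theorem pk_unique (f g : ℕ → ℝ) (F : ℝ → ℝ)
    (hf : ∀ u : ℝ, |u| ≤ 1 → HasSum (fun n => f n * u ^ n) (F u))
    (hg : ∀ u : ℝ, |u| ≤ 1 → HasSum (fun n => g n * u ^ n) (F u)) : f = g := by
  have aux : ∀ f : ℕ → ℝ, (∀ u : ℝ, |u| ≤ 1 → HasSum (fun n => f n * u ^ n) (F u)) →
      HasFPowerSeriesAt F (FormalMultilinearSeries.ofScalars ℝ f) 0 := by
    intro f hf
    rw [hasFPowerSeriesAt_iff]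
    filter_upwards [Metric.ball_mem_nhds (0 : ℝ) one_pos] with u hu
    have := hf u (by simpa using (mem_ball_zero_iff.1 hu).le)
    simpa [FormalMultilinearSeries.coeff_ofScalars, mul_comm] using this
  have h := (aux f hf).eq_formalMultilinearSeries (aux g hg)
  funext n
  have := congrArg (fun p => FormalMultilinearSeries.coeff p n) h
  simpa [FormalMultilinearSeries.coeff_ofScalars] using this

set_option maxHeartbeats 1000000 in
theorem pk_main (r q E D : ℝ) (hr : 0 < r) (hq0 : 0 < q) (hq1 : q < 1) (hE : 1 < E) (hD : 1 < D)
    (x z : ℕ) :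
    HasSum (fun y : ℕ => pKer r q ((1 - q) / (E - q)) x y * pKer r q ((1 - q) / (D - q)) y z)
      (pKer r q ((1 - q) / (E * D - q)) x z) := by
  have hP0 := pk_nonneg r q E hr hq0 hq1 hE
  have hQ0 := pk_nonneg r q D hr hq0 hq1 hD
  have gP := pk_gfE r q E hr hq0 hq1 hE
  have gQ := pk_gfE r q D hr hq0 hq1 hD
  generalize pKer r q ((1 - q) / (E - q)) = P at *
  generalize pKer r q ((1 - q) / (D - q)) = Q at *
  have hED : 1 < E * D := by nlinarith
  have hQ1 : ∀ y, HasSum (fun z => Q y z) 1 := by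
    intro y
    have h := gQ 1 (by simp) y
    have e1 : D - q - q * (D - 1) * 1 = D * (1 - q) := by ring
    have e2 : D - 1 + (1 - q * D) * 1 = D * (1 - q) := by ring
    have e3 : D * (1 - q) ≠ 0 := (mul_pos (by linarith) (by linarith)).ne'
    rw [e1, e2, div_self e3] at h
    simpa using h
  have hP1 : Summable fun y => P x y := by
    simpa using (gP 1 (by simp) x).summable
  have hS : Summable fun p : ℕ × ℕ => P x p.1 * Q p.1 p.2 := by
    rw [summable_prod_of_nonneg (fun p => mul_nonneg (hP0 _ _) (hQ0 _ _))]
    dsimp only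
    refine ⟨fun y => Summable.mul_left (P x y) (hQ1 y).summable, ?_⟩
    simpa only [tsum_mul_left, (hQ1 _).tsum_eq, mul_one] using hP1
  have hS' : ∀ z, Summable fun y => P x y * Q y z := fun z =>
    hS.comp_injective (i := fun y => (y, z)) (fun a b h => (Prod.ext_iff.1 h).1)
  have heq : (fun z => ∑' y, P x y * Q y z) = fun z => pKer r q ((1 - q) / (E * D - q)) x z := by
    refine pk_unique _ _ _ ?_ (fun u hu => pk_gfE r q (E * D) hr hq0 hq1 hED u hu x)
    intro u hu
    obtain ⟨hu1, hu2⟩ := abs_le.1 hu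
    have hT : Summable fun p : ℕ × ℕ => P x p.1 * Q p.1 p.2 * u ^ p.2 := by
      refine Summable.of_norm_bounded hS fun p => ?_
      rw [norm_mul, Real.norm_of_nonneg (mul_nonneg (hP0 _ _) (hQ0 _ _)), norm_pow]
      exact mul_le_of_le_one_right (mul_nonneg (hP0 _ _) (hQ0 _ _))
        (pow_le_one₀ (norm_nonneg _) hu)
    have hd : 0 < D - q - q * (D - 1) * u := by
      have : 0 < q * (D - 1) := mul_pos hq0 (by linarith)
      nlinarith
    have hd' : 0 < E * D - q - q * (E * D - 1) * u := by
      have : 0 < q * (E * D - 1) := mul_pos hq0 (by linarith)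
      nlinarith
    set w := ((D - 1) + (1 - q * D) * u) / (D - q - q * (D - 1) * u) with hw
    have hwabs : |w| ≤ 1 := by
      rw [hw, abs_le, div_le_one hd, le_div_iff₀ hd]
      constructor
      · nlinarith [mul_nonneg (by linarith : 0 ≤ 1 + u) (by nlinarith : 0 ≤ D * (1 - q)),
          mul_nonneg (by linarith : 0 ≤ 1 - u) (by nlinarith : 0 ≤ (D - 1) * (1 + q))]
      · nlinarith [mul_nonneg (by linarith : 0 ≤ 1 - u) (by linarith : 0 ≤ 1 - q)]
    have hd2 : 0 < E - q - q * (E - 1) * w := by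
      have : 0 < q * (E - 1) := mul_pos hq0 (by linarith)
      nlinarith [(abs_le.1 hwabs).2]
    have hrow : HasSum (fun y => P x y * ((D * (1 - q) / (D - q - q * (D - 1) * u)) ^ r * w ^ y))
        (∑' p : ℕ × ℕ, P x p.1 * Q p.1 p.2 * u ^ p.2) := by
      refine hT.hasSum.prod_fiberwise fun y => ?_
      refine pk_congr ((gQ u hu y).mul_left (P x y)) ?_ rfl
      funext n
      exact mul_assoc _ _ _
    have hrow2 := (gP w hwabs x).mul_left
      ((D * (1 - q) / (D - q - q * (D - 1) * u)) ^ r)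
    have e0 : E - q - q * (E - 1) * w = (1 - q) * (E * D - q - q * (E * D - 1) * u) /
        (D - q - q * (D - 1) * u) := by
      rw [hw]
      field_simp
      ring
    have hq2 : 0 < 1 - q := by linarith
    have hval : (D * (1 - q) / (D - q - q * (D - 1) * u)) ^ r *
        ((E * (1 - q) / (E - q - q * (E - 1) * w)) ^ r *
          ((E - 1 + (1 - q * E) * w) / (E - q - q * (E - 1) * w)) ^ x) =
        (E * D * (1 - q) / (E * D - q - q * (E * D - 1) * u)) ^ r *
        ((E * D - 1 + (1 - q * (E * D)) * u) / (E * D - q - q * (E * D - 1) * u)) ^ x := by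
      rw [← mul_assoc, ← Real.mul_rpow (by positivity) (by positivity)]
      congr 2
      · rw [e0]
        field_simp
      · rw [e0, hw]
        field_simp
        ring
    have htot : ∑' p : ℕ × ℕ, P x p.1 * Q p.1 p.2 * u ^ p.2 =
        (E * D * (1 - q) / (E * D - q - q * (E * D - 1) * u)) ^ r *
        ((E * D - 1 + (1 - q * (E * D)) * u) / (E * D - q - q * (E * D - 1) * u)) ^ x := by
      rw [hval] at hrow2
      refine hrow.unique ?_
      refine pk_congr hrow2 ?_ rfl
      funext y
      ring
    rw [← htot]
    have hswap := (Equiv.prodComm ℕ ℕ).hasSum_iff.2 hT.hasSum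
    refine hswap.prod_fiberwise fun z => ?_
    exact (hS' z).hasSum.mul_right (u ^ z)
  have := (hS' z).hasSum
  rwa [congrFun heq z] at this

/-- With Θ_t = (1-q)/(e^{ct}-q), the family p_t := p_{Θ_t} satisfies the
    Chapman–Kolmogorov equations: ∑_y p_t(x,y) p_s(y,z) = p_{t+s}(x,z). -/
theorem pKer_chapman_kolmogorov
    (r q c : ℝ) (hr : 0 < r) (hq : q ∈ Set.Ioo (0 : ℝ) 1) (hc : 0 < c)
    (t s : ℝ) (ht : 0 < t) (hs : 0 < s) (x z : ℕ) :
    HasSum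
      (fun y : ℕ =>
        pKer r q ((1 - q) / (Real.exp (c * t) - q)) x y *
          pKer r q ((1 - q) / (Real.exp (c * s) - q)) y z)
      (pKer r q ((1 - q) / (Real.exp (c * (t + s)) - q)) x z) := by
  have hE : 1 < Real.exp (c * t) := Real.one_lt_exp_iff.2 (mul_pos hc ht)
  have hD : 1 < Real.exp (c * s) := Real.one_lt_exp_iff.2 (mul_pos hc hs)
  have h := pk_main r q _ _ hr hq.1 hq.2 hE hD x z
  rwa [← Real.exp_add, ← mul_add] at h
end

section
/- Let r > 0 be a real number, q ∈ (0,1), c > 0, and define p_t(x,z) as the transition kernel p_Θ with parameter Θ = Θ_t = (1-q)/(e^{ct}-q). Then for every natural number i ≥ 1, p_t(i, i-1)/t → c·i/(1-q) as t → 0⁺; that is, the infinitesimal death rate from state i is μ_i = c i/(1-q). -/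
open Filter Topology

/-- Infinitesimal death rate: with Θ_t = (1-q)/(e^{ct}-q) and i ≥ 1,
    p_t(i, i-1)/t → c·i/(1-q) as t → 0⁺. -/
theorem pKer_death_rate
    (r q c : ℝ) (hr : 0 < r) (hq : q ∈ Set.Ioo (0 : ℝ) 1) (hc : 0 < c)
    (i : ℕ) (hi : 1 ≤ i) :
    Tendsto (fun t : ℝ => pKer r q ((1 - q) / (Real.exp (c * t) - q)) i (i - 1) / t)
      (𝓝[>] (0 : ℝ)) (𝓝 (c * i / (1 - q))) := by
  obtain ⟨hq0, hq1⟩ := hq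
  obtain ⟨n, rfl⟩ : ∃ n, i = n + 1 := ⟨i - 1, by omega⟩
  have hq1' : (1 : ℝ) - q ≠ 0 := by linarith
  -- derivative of Θ at 0
  have hE : HasDerivAt (fun t : ℝ => Real.exp (c * t) - q) c 0 := by
    have h := (((hasDerivAt_id (0 : ℝ)).const_mul c).exp).sub_const q
    simpa using h
  have hE0 : Real.exp (c * 0) - q ≠ 0 := by simpa using hq1'
  have hT : HasDerivAt (fun t : ℝ => (1 - q) / (Real.exp (c * t) - q)) (-(c / (1 - q))) 0 := by
    have h := (hasDerivAt_const (0 : ℝ) (1 - q)).fun_div hE hE0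
    refine h.congr_deriv ?_
    rw [mul_zero, Real.exp_zero]
    field_simp
    ring
  have hT0 : (1 - q) / (Real.exp (c * 0) - q) = 1 := by
    simp [div_self hq1']
  have hslope : Tendsto (fun t : ℝ => (1 - (1 - q) / (Real.exp (c * t) - q)) / t)
      (𝓝[>] (0 : ℝ)) (𝓝 (c / (1 - q))) := by
    have h := (hasDerivAt_iff_tendsto_slope_zero.mp hT).neg
    rw [neg_neg] at h
    refine (h.mono_left (nhdsWithin_mono _ (fun x hx => ne_of_gt hx))).congr ?_
    intro t
    rw [hT0, zero_add, smul_eq_mul]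
    ring
  have hTt : Tendsto (fun t : ℝ => (1 - q) / (Real.exp (c * t) - q)) (𝓝[>] (0 : ℝ)) (𝓝 1) := by
    have h := hT.continuousAt.tendsto
    rw [hT0] at h
    exact h.mono_left nhdsWithin_le_nhds
  -- the kernel without one factor `1 - Θ`
  let S : ℝ → ℝ := fun Θ => ∑ y ∈ Finset.range (n + 1),
    Real.Gamma ((n : ℝ) + r) / (((n - y).factorial : ℝ) * Real.Gamma ((y : ℝ) + r)) *
      (q * (1 - Θ)) ^ (n - y) * (1 - q * (1 - Θ)) ^ (r + (y : ℝ)) *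
      ((n + 1).choose y : ℝ) * Θ ^ y * (1 - Θ) ^ (n - y)
  have hS : ∀ Θ, pKer r q Θ (n + 1) n = S Θ * (1 - Θ) := by
    intro Θ
    have hmin : min (n + 1) n = n := by omega
    simp only [pKer, S, hmin]
    rw [Finset.sum_mul]
    refine Finset.sum_congr rfl fun y hy => ?_
    have hy' : n + 1 - y = (n - y) + 1 := by
      have := Finset.mem_range.mp hy
      omega
    rw [hy', pow_succ]
    ring
  have hSc : ContinuousAt S 1 := by
    refine tendsto_finsetSum _ fun y _ => ?_
    have h1 : ContinuousAt (fun Θ : ℝ => (1 - q * (1 - Θ)) ^ (r + (y : ℝ))) 1 := by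
      refine ContinuousAt.rpow_const (by fun_prop) (Or.inl (by simp))
    have h2 : ContinuousAt (fun Θ : ℝ => Real.Gamma ((n : ℝ) + r) /
      (((n - y).factorial : ℝ) * Real.Gamma ((y : ℝ) + r)) * (q * (1 - Θ)) ^ (n - y)) 1 := by
      fun_prop
    exact ((((h2.mul h1).mul continuousAt_const).mul (by fun_prop)).mul (by fun_prop))
  have hS1 : S 1 = (n : ℝ) + 1 := by
    simp only [S]
    rw [Finset.sum_range_succ, Finset.sum_eq_zero]
    · have hG : Real.Gamma ((n : ℝ) + r) ≠ 0 := (Real.Gamma_pos_of_pos (by positivity)).ne'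
      simp [div_self hG]
    · intro y hy
      have : n - y ≠ 0 := by
        have := Finset.mem_range.mp hy
        omega
      simp [this]
  have hfin := (hSc.tendsto.comp hTt).mul hslope
  rw [hS1] at hfin
  have hval : c * ((n + 1 : ℕ) : ℝ) / (1 - q) = ((n : ℝ) + 1) * (c / (1 - q)) := by
    push_cast
    ring
  rw [hval]
  refine hfin.congr fun t => ?_
  rw [Nat.add_sub_cancel, hS, mul_div_assoc]
  rfl
end

section
/- Let r > 0 be a real number, q ∈ (0,1), c > 0, and define p_t(x,z) as the transition kernel p_Θ with parameter Θ = Θ_t = (1-q)/(e^{ct}-q). Then for every natural number i, p_t(i, i+1)/t → c·q·(i+r)/(1-q) as t → 0⁺; that is, the infinitesimal birth rate from state i is λ_i = cq(i+r)/(1-q). -/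
open Filter Topology

/-- Infinitesimal birth rate: with Θ_t = (1-q)/(e^{ct}-q),
    p_t(i, i+1)/t → c·q·(i+r)/(1-q) as t → 0⁺. -/
theorem pKer_birth_rate
    (r q c : ℝ) (hr : 0 < r) (hq : q ∈ Set.Ioo (0 : ℝ) 1) (hc : 0 < c)
    (i : ℕ) :
    Tendsto (fun t : ℝ => pKer r q ((1 - q) / (Real.exp (c * t) - q)) i (i + 1) / t)
      (𝓝[>] (0 : ℝ)) (𝓝 (c * q * ((i : ℝ) + r) / (1 - q))) := by
  obtain ⟨hq0, hq1⟩ := hq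
  have hq1' : (1 - q) ≠ 0 := by linarith
  set Θ : ℝ → ℝ := fun t => (1 - q) / (Real.exp (c * t) - q) with hΘdef
  have hΘ0 : Θ 0 = 1 := by simp [hΘdef, hq1']
  have hderiv : HasDerivAt Θ (-(c / (1 - q))) 0 := by
    have h1 : HasDerivAt (fun t : ℝ => Real.exp (c * t) - q) c 0 := by
      have h2 := (((hasDerivAt_id (0 : ℝ)).const_mul c).exp).sub_const q
      simpa using h2
    have h3 := (hasDerivAt_const (0 : ℝ) (1 - q)).div h1 (by simpa using hq1')
    have h4 : (0 * (Real.exp (c * 0) - q) - (1 - q) * c) / (Real.exp (c * 0) - q) ^ 2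
        = -(c / (1 - q)) := by
      rw [mul_zero, Real.exp_zero]
      field_simp
      ring
    rw [h4] at h3
    exact h3
  have hΘ : Tendsto Θ (𝓝[>] 0) (𝓝 1) := by
    have h := hderiv.continuousAt.tendsto
    rw [hΘ0] at h
    exact h.mono_left nhdsWithin_le_nhds
  have hd : Tendsto (fun t => (1 - Θ t) / t) (𝓝[>] 0) (𝓝 (c / (1 - q))) := by
    have h := (hasDerivAt_iff_tendsto_slope.mp hderiv).neg
    rw [neg_neg] at h
    refine (h.mono_left (nhdsWithin_mono 0 ?_)).congr ?_
    · intro x hx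
      exact ne_of_gt hx
    · intro t
      rw [slope_def_field, hΘ0, sub_zero]
      ring
  have h1Θ : Tendsto (fun t => 1 - Θ t) (𝓝[>] 0) (𝓝 0) := by
    simpa using hΘ.const_sub 1
  have hbase : Tendsto (fun t => 1 - q * (1 - Θ t)) (𝓝[>] 0) (𝓝 1) := by
    simpa using (h1Θ.const_mul q).const_sub 1
  have key : Tendsto (fun t => ∑ y ∈ Finset.range (i + 1),
      Real.Gamma (((i + 1 : ℕ) : ℝ) + r) /
          (((i + 1 - y).factorial : ℝ) * Real.Gamma ((y : ℝ) + r)) *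
        (q * ((1 - Θ t) / t)) * (q * (1 - Θ t)) ^ (i - y) *
        (1 - q * (1 - Θ t)) ^ (r + (y : ℝ)) *
        (i.choose y : ℝ) * Θ t ^ y * (1 - Θ t) ^ (i - y)) (𝓝[>] 0)
      (𝓝 (∑ y ∈ Finset.range (i + 1),
      Real.Gamma (((i + 1 : ℕ) : ℝ) + r) /
          (((i + 1 - y).factorial : ℝ) * Real.Gamma ((y : ℝ) + r)) *
        (q * (c / (1 - q))) * (q * 0) ^ (i - y) * (1 : ℝ) ^ (r + (y : ℝ)) *
        (i.choose y : ℝ) * 1 ^ y * 0 ^ (i - y))) := by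
    refine tendsto_finsetSum _ fun y _ => ?_
    exact ((((((hd.const_mul q).const_mul _).mul ((h1Θ.const_mul q).pow _)).mul
      (hbase.rpow_const (Or.inl one_ne_zero))).mul_const _).mul (hΘ.pow _)).mul (h1Θ.pow _)
  have hval : (∑ y ∈ Finset.range (i + 1),
      Real.Gamma (((i + 1 : ℕ) : ℝ) + r) /
          (((i + 1 - y).factorial : ℝ) * Real.Gamma ((y : ℝ) + r)) *
        (q * (c / (1 - q))) * (q * 0) ^ (i - y) * (1 : ℝ) ^ (r + (y : ℝ)) *
        (i.choose y : ℝ) * 1 ^ y * 0 ^ (i - y)) = c * q * ((i : ℝ) + r) / (1 - q) := by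
    rw [Finset.sum_eq_single i]
    · have hpos : 0 < (i : ℝ) + r := by positivity
      have hG : Real.Gamma (((i + 1 : ℕ) : ℝ) + r) = ((i : ℝ) + r) * Real.Gamma ((i : ℝ) + r) := by
        rw [← Real.Gamma_add_one hpos.ne']
        congr 1
        push_cast
        ring
      have hGne := (Real.Gamma_pos_of_pos hpos).ne'
      rw [hG]
      simp
      field_simp
    · intro y hy hne
      have : i - y ≠ 0 := by
        have := Finset.mem_range.mp hy
        omega
      simp [this]
    · simp
  rw [hval] at key
  refine key.congr fun t => ?_
  simp only [pKer]
  rw [Finset.sum_div, min_eq_left (Nat.le_succ i)]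
  refine Finset.sum_congr rfl fun y hy => ?_
  have hs : i + 1 - y = (i - y) + 1 := by
    have := Finset.mem_range.mp hy
    omega
  rw [hs, pow_succ (q * _)]
  simp only [hΘdef]
  ring
end

section
/- Let r > 0 be a real number, q ∈ (0,1), c > 0, and define p_t(x,z) as the transition kernel p_Θ with parameter Θ = Θ_t = (1-q)/(e^{ct}-q). Then for every natural number i, (p_t(i, i) - 1)/t → -(c·i/(1-q) + c·q·(i+r)/(1-q)) as t → 0⁺; that is, the total rate of leaving state i is ci/(1-q) + cq(i+r)/(1-q). -/
open Filter Topology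

lemma pKer_hasDerivAt (r q : ℝ) (hr : 0 < r) (i : ℕ) :
    HasDerivAt (fun Θ : ℝ => pKer r q Θ i i) (q * (r + i) + i) 1 := by
  have hB : ∀ s : ℝ, HasDerivAt (fun Θ : ℝ => (1 - q * (1 - Θ)) ^ s) (q * s) 1 := by
    intro s
    have h1 : HasDerivAt (fun Θ : ℝ => 1 - q * (1 - Θ)) q 1 := by
      have := (((hasDerivAt_id (1 : ℝ)).const_sub 1).const_mul q).const_sub 1
      simpa using this
    have := h1.rpow_const (p := s) (Or.inl (by norm_num))
    simpa using this
  have hG : Real.Gamma ((i : ℝ) + r) ≠ 0 := (Real.Gamma_pos_of_pos (by positivity)).ne'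
  unfold pKer
  simp only [min_self, Finset.sum_range_succ]
  have hlast : HasDerivAt (fun Θ : ℝ =>
      Real.Gamma ((i : ℝ) + r) / (((i - i).factorial : ℝ) * Real.Gamma ((i : ℝ) + r)) *
      (q * (1 - Θ)) ^ (i - i) * (1 - q * (1 - Θ)) ^ (r + (i : ℝ)) *
      (i.choose i : ℝ) * Θ ^ i * (1 - Θ) ^ (i - i)) (q * (r + i) + i) 1 := by
    have := (hB (r + i)).fun_mul (hasDerivAt_pow i (1 : ℝ))
    simpa [hG] using this
  have hrest : HasDerivAt (fun Θ : ℝ => ∑ y ∈ Finset.range i,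
      Real.Gamma ((i : ℝ) + r) / (((i - y).factorial : ℝ) * Real.Gamma ((y : ℝ) + r)) *
      (q * (1 - Θ)) ^ (i - y) * (1 - q * (1 - Θ)) ^ (r + (y : ℝ)) *
      (i.choose y : ℝ) * Θ ^ y * (1 - Θ) ^ (i - y)) (∑ y ∈ Finset.range i, 0) 1 := by
    apply HasDerivAt.fun_sum
    intro y hy
    have hk : i - y ≠ 0 := by have := Finset.mem_range.mp hy; omega
    have hF : DifferentiableAt ℝ (fun Θ : ℝ =>
      Real.Gamma ((i : ℝ) + r) / (((i - y).factorial : ℝ) * Real.Gamma ((y : ℝ) + r)) *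
      (q * (1 - Θ)) ^ (i - y) * (1 - q * (1 - Θ)) ^ (r + (y : ℝ)) *
      (i.choose y : ℝ) * Θ ^ y) 1 := by
      have := (hB (r + y)).differentiableAt
      fun_prop
    have hH : DifferentiableAt ℝ (fun Θ : ℝ => (1 - Θ) ^ (i - y)) 1 := by fun_prop
    have := hF.hasDerivAt.fun_mul hH.hasDerivAt
    refine this.congr_deriv ?_
    simp [hk]
  refine (hrest.fun_add hlast).congr_deriv (by simp)

/-- Total holding rate: with Θ_t = (1-q)/(e^{ct}-q),
    (p_t(i,i) - 1)/t → -(c·i/(1-q) + c·q·(i+r)/(1-q)) as t → 0⁺. -/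
theorem pKer_holding_rate
    (r q c : ℝ) (hr : 0 < r) (hq : q ∈ Set.Ioo (0 : ℝ) 1) (hc : 0 < c)
    (i : ℕ) :
    Tendsto (fun t : ℝ => (pKer r q ((1 - q) / (Real.exp (c * t) - q)) i i - 1) / t)
      (𝓝[>] (0 : ℝ))
      (𝓝 (-(c * i / (1 - q) + c * q * ((i : ℝ) + r) / (1 - q)))) := by
  have h1q : 1 - q ≠ 0 := by have := hq.2; intro h; linarith
  have hE : HasDerivAt (fun t : ℝ => Real.exp (c * t) - q) c 0 := by
    have := (((hasDerivAt_id (0 : ℝ)).const_mul c).exp).sub_const q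
    simpa using this
  have hT : HasDerivAt (fun t : ℝ => (1 - q) / (Real.exp (c * t) - q)) (-c / (1 - q)) 0 := by
    have := (hasDerivAt_const (0 : ℝ) (1 - q)).fun_div hE (by simpa using h1q)
    refine this.congr_deriv ?_
    simp
    field_simp
  have hT0 : (1 - q) / (Real.exp (c * 0) - q) = 1 := by simp [h1q]
  have hG : Real.Gamma ((i : ℝ) + r) ≠ 0 := (Real.Gamma_pos_of_pos (by positivity)).ne'
  have hp1 : pKer r q 1 i i = 1 := by
    unfold pKer
    rw [min_self, Finset.sum_range_succ, Finset.sum_eq_zero]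
    · simp [hG]
    · intro y hy
      have hk : i - y ≠ 0 := by have := Finset.mem_range.mp hy; omega
      simp [hk]
  have hK := pKer_hasDerivAt r q hr i
  rw [← hT0] at hK
  have hC := HasDerivAt.comp (0 : ℝ) hK hT
  have hS := (hasDerivAt_iff_tendsto_slope_zero.mp hC).mono_left
    (nhdsWithin_mono (0 : ℝ) (s := Set.Ioi (0 : ℝ)) (fun x hx => ne_of_gt (Set.mem_Ioi.mp hx)))
  simp only [Function.comp, zero_add, hT0, hp1, smul_eq_mul] at hS
  convert hS using 2
  · rw [div_eq_inv_mul]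
  · field_simp
    ring
end

section
/- Let r > 0 be a real number, q ∈ (0,1), c > 0, and define p_t(x,z) as the transition kernel p_Θ with parameter Θ = Θ_t = (1-q)/(e^{ct}-q). Then for all natural numbers i and j with |i - j| ≥ 2, p_t(i, j)/t → 0 as t → 0⁺; that is, the associated continuous-time Markov chain only jumps to nearest-neighbour states, so it is a birth–death (with immigration) process. -/
open Filter Topology

/-- Nearest-neighbour jumps only: with Θ_t = (1-q)/(e^{ct}-q) and |i - j| ≥ 2,
    p_t(i, j)/t → 0 as t → 0⁺, so the chain is a birth–death (with immigration)
    process. -/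
theorem pKer_no_distant_jumps
    (r q c : ℝ) (hr : 0 < r) (hq : q ∈ Set.Ioo (0 : ℝ) 1) (hc : 0 < c)
    (i j : ℕ) (hij : 2 ≤ |(i : ℤ) - (j : ℤ)|) :
    Tendsto (fun t : ℝ => pKer r q ((1 - q) / (Real.exp (c * t) - q)) i j / t)
      (𝓝[>] (0 : ℝ)) (𝓝 0) := by
  obtain ⟨hq0, hq1⟩ := hq
  have hne : (1 - q) ≠ 0 := by linarith
  set Θ : ℝ → ℝ := fun t => (1 - q) / (Real.exp (c * t) - q) with hΘ
  have hΘ0 : Θ 0 = 1 := by simp [hΘ, hne]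
  have hdiff : DifferentiableAt ℝ Θ 0 := by
    have : Real.exp (c * 0) - q ≠ 0 := by simpa using hne
    have h2 : DifferentiableAt ℝ (fun t : ℝ => Real.exp (c * t) - q) 0 := by fun_prop
    exact (differentiableAt_const _).div h2 this
  have hcont : Tendsto Θ (𝓝[>] 0) (𝓝 1) := by
    have := hdiff.continuousAt.tendsto
    rw [hΘ0] at this
    exact this.mono_left nhdsWithin_le_nhds
  have hu : Tendsto (fun t => 1 - Θ t) (𝓝[>] 0) (𝓝 0) := by
    simpa using (tendsto_const_nhds (x := (1 : ℝ))).sub hcont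
  have hslope : Tendsto (fun t => (1 - Θ t) / t) (𝓝[>] 0) (𝓝 (-deriv Θ 0)) := by
    have h := hdiff.hasDerivAt.tendsto_slope_zero_right
    refine h.neg.congr fun t => ?_
    simp only [zero_add, hΘ0, smul_eq_mul]
    ring
  change Tendsto (fun t : ℝ => pKer r q (Θ t) i j / t) _ _
  clear_value Θ
  unfold pKer
  simp_rw [Finset.sum_div]
  have hz : (0 : ℝ) = ∑ _y ∈ Finset.range (min i j + 1), (0 : ℝ) := by simp
  rw [show 𝓝 (0 : ℝ) = 𝓝 (∑ _y ∈ Finset.range (min i j + 1), (0 : ℝ)) by rw [← hz]]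
  refine tendsto_finsetSum _ fun y hy => ?_
  obtain ⟨n, hn⟩ : ∃ n, (j - y) + (i - y) = n + 2 := by
    refine ⟨(j - y) + (i - y) - 2, ?_⟩
    have := Finset.mem_range.1 hy
    rcases le_abs.1 hij with h | h <;> omega
  have hp : Tendsto (fun t => (1 - q * (1 - Θ t)) ^ (r + (y : ℝ))) (𝓝[>] 0) (𝓝 1) := by
    have h1 : Tendsto (fun t => 1 - q * (1 - Θ t)) (𝓝[>] 0) (𝓝 1) := by
      simpa using (tendsto_const_nhds (x := (1 : ℝ))).sub (hu.const_mul q)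
    simpa using h1.rpow_const (p := r + (y : ℝ)) (Or.inl one_ne_zero)
  have key := ((((hp.mul (hcont.pow y)).mul (hu.pow n)).mul hslope).mul hu).const_mul
    (Real.Gamma ((j : ℝ) + r) / (((j - y).factorial : ℝ) * Real.Gamma ((y : ℝ) + r)) *
      q ^ (j - y) * (i.choose y : ℝ))
  rw [mul_zero, mul_zero] at key
  refine key.congr fun t => ?_
  have e : (1 - Θ t) ^ (j - y) * (1 - Θ t) ^ (i - y) = (1 - Θ t) ^ n * (1 - Θ t) * (1 - Θ t) := by
    rw [← pow_add, hn]; ring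
  rw [mul_pow]
  linear_combination (-(Real.Gamma ((j : ℝ) + r) / (((j - y).factorial : ℝ) *
    Real.Gamma ((y : ℝ) + r)) * q ^ (j - y) * (i.choose y : ℝ) *
    (1 - q * (1 - Θ t)) ^ (r + (y : ℝ)) * Θ t ^ y / t)) * e
end

section
/- Let r > 0 be a real number, q ∈ (0,1) and c > 0, and define p_t(x,z) as the transition kernel p_Θ with parameter Θ = Θ_t = (1-q)/(e^{ct}-q). Then for every pair of natural numbers x, z, p_t(x, z) → NB(z; r, q) = Γ(z+r)/(z! Γ(r)) q^z (1-q)^r as t → ∞; that is, the chain converges in distribution to its negative binomial stationary law regardless of the initial state. -/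
open Filter Topology

/-- Ergodic convergence: with Θ_t = (1-q)/(e^{ct}-q),
    p_t(x, z) → NB(z; r, q) as t → ∞, for every initial state x. -/
theorem pKer_tendsto_stationary
    (r q c : ℝ) (hr : 0 < r) (hq : q ∈ Set.Ioo (0 : ℝ) 1) (hc : 0 < c)
    (x z : ℕ) :
    Tendsto (fun t : ℝ => pKer r q ((1 - q) / (Real.exp (c * t) - q)) x z)
      atTop (𝓝 (nbPMF r q z)) := by
  have hΘ : Tendsto (fun t : ℝ => (1 - q) / (Real.exp (c * t) - q)) atTop (𝓝 0) := by
    apply Tendsto.div_atTop tendsto_const_nhds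
    exact tendsto_atTop_add_const_right _ (-q)
      (Real.tendsto_exp_atTop.comp (tendsto_id.const_mul_atTop hc))
  have hcont : ContinuousAt (fun Θ : ℝ => pKer r q Θ x z) 0 := by
    unfold pKer
    apply tendsto_finsetSum
    intro y _
    have h1 : ContinuousAt (fun Θ : ℝ => (1 - q * (1 - Θ)) ^ (r + (y : ℝ))) 0 := by
      apply ContinuousAt.rpow_const
      · fun_prop
      · left
        have := hq.2
        intro h
        linarith
    have h2 : ContinuousAt (fun Θ : ℝ => (q * (1 - Θ)) ^ (z - y)) 0 := by fun_prop
    have h3 : ContinuousAt (fun Θ : ℝ => Θ ^ y) 0 := by fun_prop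
    have h4 : ContinuousAt (fun Θ : ℝ => (1 - Θ) ^ (x - y)) 0 := by fun_prop
    exact ((((continuousAt_const.mul h2).mul h1).mul continuousAt_const).mul h3).mul h4
  have hval : pKer r q 0 x z = nbPMF r q z := by
    unfold pKer nbPMF
    rw [Finset.sum_eq_single 0]
    · simp
    · intro y _ hy
      simp [hy]
    · intro h
      simp at h
  rw [← hval]
  exact hcont.tendsto.comp hΘ
end
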